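/- For all (ρ,ε)∈(0,1)×(0,1): g_ρ(2(1−ε)/γ) ≤ (1/2)·exp( −(ε²/16)·|ln ρ|/(1−ε) ) + exp( −(ε/2)·|ln ρ| )/(1−ρ), and g_ρ(2(1+ε)/γ) ≥ ( 1 − (1/2)·exp(−(ε²/16)·|ln ρ|) ) / ( 1 + exp(−(ε/2)·|ln ρ|) ). -/

import Mathlib

open MeasureTheory ProbabilityTheory Real

noncomputable section

namespace BernoulliPrior

/-- Standard Gaussian measure on ℝ. -/
def stdG : Measure ℝ := gaussianReal 0 1

/-- The Bernoulli prior (1−ρ)δ₀ + ρδ₁. -/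
def bern (ρ : ℝ) : Measure ℝ :=
  ENNReal.ofReal (1 - ρ) • Measure.dirac 0 + ENNReal.ofReal ρ • Measure.dirac 1

/-- ψ_ρ(r) = E[ln(1 − ρ + ρ exp(−r/2 + r X* + √r Z))]. -/
def psiB (ρ r : ℝ) : ℝ :=
  ∫ xs, ∫ z, Real.log (1 - ρ + ρ * Real.exp (-r / 2 + r * xs + Real.sqrt r * z))
    ∂stdG ∂(bern ρ)

/-- g_ρ(r) = (2/ρ) ψ_ρ'((α(ρ)/ρ) r) with α(ρ) = γρ|ln ρ|, so (α(ρ)/ρ) r = γ|ln ρ| r. -/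
def gB (γ ρ r : ℝ) : ℝ := (2 / ρ) * deriv (psiB ρ) (γ * |Real.log ρ| * r)

/-!
By Bayes' rule and Gaussian integration by parts, `psiB ρ` has derivative `ρ / 2` times the mean,
given `X* = 1`, of the posterior probability of `X* = 1`. So `gB γ ρ (2 * a / γ)` is the mean of
`sigmoid (m + s * Z)`, where `m = (a - 1) * |log ρ| - log (1 - ρ)` and `s ^ 2 = 2 * a * |log ρ|`.
The sign of `a - 1` decides whether this is close to `0` or to `1`: split the mean at `m + s * Z`
equal to about `m / 2` and bound the probability of the wrong side by a Gaussian tail.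
-/

open scoped NNReal

section Gaussian

variable {μ : ℝ} {v : ℝ≥0}

lemma hasDerivAt_gaussianPDFReal (hv : v ≠ 0) (x : ℝ) :
    HasDerivAt (gaussianPDFReal μ v) (-((x - μ) / v) * gaussianPDFReal μ v x) x := by
  have hv' : (v : ℝ) ≠ 0 := by exact_mod_cast hv
  have hexponent : HasDerivAt (fun x ↦ -(x - μ) ^ 2 / (2 * v)) (-((x - μ) / v)) x := by
    convert! (((hasDerivAt_id' x).sub_const μ).fun_pow 2).fun_neg.div_const (2 * (v : ℝ)) using 1
    field_simp
    ring
  rw [gaussianPDFReal_def]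
  convert! hexponent.exp.const_mul (√(2 * π * v))⁻¹ using 1
  ring

lemma integrable_gaussianReal_iff (hv : v ≠ 0) {f : ℝ → ℝ} :
    Integrable f (gaussianReal μ v) ↔ Integrable (fun x ↦ gaussianPDFReal μ v x * f x) := by
  rw [gaussianReal_of_var_ne_zero _ hv,
    integrable_withDensity_iff_integrable_smul' (measurable_gaussianPDF μ v)
      (ae_of_all _ fun _ ↦ gaussianPDF_lt_top)]
  simp only [toReal_gaussianPDF, smul_eq_mul]

lemma integral_sub_mul_gaussianReal {f f' : ℝ → ℝ} (hderiv : ∀ x, HasDerivAt f (f' x) x)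
    (hf : Integrable f (gaussianReal μ v))
    (hxf : Integrable (fun x ↦ (x - μ) * f x) (gaussianReal μ v))
    (hf' : Integrable f' (gaussianReal μ v)) :
    ∫ x, (x - μ) * f x ∂gaussianReal μ v = v * ∫ x, f' x ∂gaussianReal μ v := by
  obtain rfl | hv := eq_or_ne v 0
  · simp
  have hv' : (v : ℝ) ≠ 0 := by exact_mod_cast hv
  rw [integrable_gaussianReal_iff hv] at hf hxf hf'
  have hparts := integral_mul_deriv_eq_deriv_mul_of_integrable
    (fun x _ ↦ hderiv x) (fun x _ ↦ hasDerivAt_gaussianPDFReal (μ := μ) hv x)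
    ((hxf.const_mul (-(v : ℝ)⁻¹)).congr (ae_of_all _ fun x ↦ by simp only [Pi.mul_apply]; ring))
    (hf'.congr (ae_of_all _ fun x ↦ mul_comm _ _))
    (hf.congr (ae_of_all _ fun x ↦ mul_comm _ _))
  simp only [integral_gaussianReal_eq_integral_smul hv, smul_eq_mul]
  calc ∫ x, gaussianPDFReal μ v x * ((x - μ) * f x)
      = -v * ∫ x, f x * (-((x - μ) / v) * gaussianPDFReal μ v x) := by
        rw [← integral_const_mul]
        congr with x
        field_simp
    _ = v * ∫ x, gaussianPDFReal μ v x * f' x := by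
        simp only [hparts, mul_comm (f' _), neg_mul_neg]

lemma integral_comp_add_gaussianReal {E : Type*} [NormedAddCommGroup E] [NormedSpace ℝ E]
    (f : ℝ → E) (s : ℝ) :
    ∫ x, f (x + v * s) ∂gaussianReal μ v
      = ∫ x, exp (s * (x - μ) - v * s ^ 2 / 2) • f x ∂gaussianReal μ v := by
  obtain rfl | hv := eq_or_ne v 0
  · rw [gaussianReal_zero_var]
    exact integral_congr_ae (by simp [ae_dirac_eq, Filter.EventuallyEq])
  have hv' : (v : ℝ) ≠ 0 := by exact_mod_cast hv
  rw [integral_gaussianReal_eq_integral_smul hv, integral_gaussianReal_eq_integral_smul hv,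
    ← integral_sub_right_eq_self _ (v * s)]
  congr with x
  rw [sub_add_cancel, smul_smul, gaussianPDFReal, gaussianPDFReal, mul_assoc _ (exp _), ← exp_add]
  congr 3
  field_simp
  ring

lemma gaussianReal_prod_gaussianReal :
    (gaussianReal 0 1).prod (gaussianReal 0 1) = volume.withDensity fun p : ℝ × ℝ ↦
      ENNReal.ofReal ((2 * π)⁻¹ * exp (-(p.1 ^ 2 + p.2 ^ 2) / 2)) := by
  rw [gaussianReal_of_var_ne_zero _ one_ne_zero, prod_withDensity (by fun_prop) (by fun_prop),
    ← Measure.volume_eq_prod]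
  congr with p
  rw [gaussianPDF, gaussianPDF, ← ENNReal.ofReal_mul (gaussianPDFReal_nonneg _ _ _)]
  simp only [gaussianPDFReal, NNReal.coe_one, mul_one, sub_zero]
  rw [mul_mul_mul_comm, ← exp_add, ← mul_inv, mul_self_sqrt (by positivity)]
  ring_nf

lemma integral_id_mul_exp_neg_sq_div_two (t : ℝ) :
    ∫ r in (0 : ℝ)..t, r * exp (-r ^ 2 / 2) = 1 - exp (-t ^ 2 / 2) := by
  have hderiv (r : ℝ) : HasDerivAt (fun r ↦ -exp (-r ^ 2 / 2)) (r * exp (-r ^ 2 / 2)) r := by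
    convert! ((hasDerivAt_pow 2 r).fun_neg.div_const 2).exp.fun_neg using 1
    ring
  rw [intervalIntegral.integral_eq_sub_of_hasDerivAt (fun r _ ↦ hderiv r)
    (Continuous.intervalIntegrable (by fun_prop) _ _)]
  simp only [ne_eq, OfNat.ofNat_ne_zero, not_false_eq_true, zero_pow, neg_zero, zero_div, exp_zero]
  ring

lemma gaussianReal_prod_real_disc {t : ℝ} (ht : 0 ≤ t) :
    ((gaussianReal 0 1).prod (gaussianReal 0 1)).real {p | p.1 ^ 2 + p.2 ^ 2 ≤ t ^ 2}
      = 1 - exp (-t ^ 2 / 2) := by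
  set disc : Set (ℝ × ℝ) := {p | p.1 ^ 2 + p.2 ^ 2 ≤ t ^ 2}
  have hdisc : MeasurableSet disc := measurableSet_le (by fun_prop) (by fun_prop)
  set density : ℝ × ℝ → ℝ := fun p ↦ (2 * π)⁻¹ * exp (-(p.1 ^ 2 + p.2 ^ 2) / 2)
  have hpolar (p) (hp : p ∈ polarCoord.target) :
      p.1 • disc.indicator density (polarCoord.symm p)
        = (Set.Iic t).indicator (fun r ↦ r * exp (-r ^ 2 / 2)) p.1 * (2 * π)⁻¹ := by
    have hr : 0 < p.1 := hp.1
    have hnorm : (p.1 * cos p.2) ^ 2 + (p.1 * sin p.2) ^ 2 = p.1 ^ 2 := by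
      linear_combination p.1 ^ 2 * cos_sq_add_sin_sq p.2
    simp only [polarCoord_symm_apply, Set.indicator, disc, density, Set.mem_ofPred_eq, hnorm,
      Set.mem_Iic, sq_le_sq₀ hr.le ht]
    split_ifs
    · rw [smul_eq_mul]
      ring
    · simp
  calc ((gaussianReal 0 1).prod (gaussianReal 0 1)).real disc
      = ∫ p, disc.indicator density p := by
        rw [gaussianReal_prod_gaussianReal, measureReal_def, withDensity_apply _ hdisc,
          integral_indicator hdisc, integral_eq_lintegral_of_nonneg_ae
            (ae_of_all _ fun p ↦ by positivity)
            (Continuous.aestronglyMeasurable (by fun_prop))]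
    _ = ∫ p in Set.Ioi 0 ×ˢ Set.Ioo (-π) π,
          (Set.Iic t).indicator (fun r ↦ r * exp (-r ^ 2 / 2)) p.1 * (2 * π)⁻¹ := by
        rw [← integral_comp_polarCoord_symm]
        exact setIntegral_congr_fun polarCoord.open_target.measurableSet hpolar
    _ = (∫ r in (0 : ℝ)..t, r * exp (-r ^ 2 / 2)) * ∫ _ in Set.Ioo (-π) π, (2 * π)⁻¹ := by
        rw [Measure.volume_eq_prod,
          setIntegral_prod_mul ((Set.Iic t).indicator fun r ↦ r * exp (-r ^ 2 / 2))
            (fun _ ↦ (2 * π)⁻¹), setIntegral_indicator measurableSet_Iic,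
          Set.Ioi_inter_Iic, intervalIntegral.integral_of_le ht]
    _ = 1 - exp (-t ^ 2 / 2) := by
        have hangle : ∫ _ in Set.Ioo (-π) π, (2 * π)⁻¹ = 1 := by
          rw [setIntegral_const, volume_real_Ioo_of_le (by linarith [pi_pos]), smul_eq_mul]
          field_simp
          ring
        rw [integral_id_mul_exp_neg_sq_div_two, hangle, mul_one]

lemma gaussianReal_real_Iio_neg (t : ℝ) :
    (gaussianReal 0 v).real (Set.Iio (-t)) = (gaussianReal 0 v).real (Set.Ioi t) := by
  have hneg : (gaussianReal 0 v).map (fun x ↦ -x) = gaussianReal 0 v := by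
    rw [gaussianReal_map_neg, neg_zero]
  rw [← Set.neg_Ioi]
  nth_rw 2 [← hneg]
  rw [map_measureReal_apply measurable_neg measurableSet_Ioi]
  rfl

lemma gaussianReal_real_Icc_neg_self {t : ℝ} (ht : 0 ≤ t) :
    (gaussianReal 0 v).real (Set.Icc (-t) t) = 1 - 2 * (gaussianReal 0 v).real (Set.Ioi t) := by
  have hcompl : (Set.Icc (-t) t)ᶜ = Set.Iio (-t) ∪ Set.Ioi t := by
    ext
    simp [or_iff_not_imp_left]
  have hunion := measureReal_union (μ := gaussianReal 0 v)
    (Set.Iio_disjoint_Ioi_of_le (neg_le_self ht)) measurableSet_Ioi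
  rw [← hcompl, probReal_compl_eq_one_sub measurableSet_Icc, gaussianReal_real_Iio_neg] at hunion
  linarith

/-- The disc of radius `t` lies in the square `[-t, t]²`, whose Gaussian mass is `(1 - 2 Q)²` with
`Q` the tail on the left-hand side. -/
lemma gaussianReal_real_Ioi_le {t : ℝ} (ht : 0 ≤ t) :
    (gaussianReal 0 1).real (Set.Ioi t) ≤ (1 - √(1 - exp (-t ^ 2 / 2))) / 2 := by
  have hsubset : {p : ℝ × ℝ | p.1 ^ 2 + p.2 ^ 2 ≤ t ^ 2} ⊆ Set.Icc (-t) t ×ˢ Set.Icc (-t) t := by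
    intro p (hp : p.1 ^ 2 + p.2 ^ 2 ≤ t ^ 2)
    exact ⟨abs_le.1 (abs_le_of_sq_le_sq (by linarith [sq_nonneg p.2]) ht),
      abs_le.1 (abs_le_of_sq_le_sq (by linarith [sq_nonneg p.1]) ht)⟩
  have hsquare : 1 - exp (-t ^ 2 / 2) ≤ (gaussianReal 0 1).real (Set.Icc (-t) t) ^ 2 := by
    rw [← gaussianReal_prod_real_disc ht, sq (Measure.real _ _), ← measureReal_prod_prod]
    exact measureReal_mono hsubset
  have hsqrt := sqrt_le_iff.2 ⟨measureReal_nonneg, hsquare⟩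
  rw [gaussianReal_real_Icc_neg_self ht] at hsqrt
  linarith

lemma gaussianReal_real_Ioi_le_exp {t : ℝ} (ht : 0 ≤ t) :
    (gaussianReal 0 1).real (Set.Ioi t) ≤ exp (-t ^ 2 / 2) / 2 := by
  have h0 := exp_pos (-t ^ 2 / 2)
  have h1 : exp (-t ^ 2 / 2) ≤ 1 := exp_le_one_iff.2 (by nlinarith)
  have hsqrt : 1 - exp (-t ^ 2 / 2) ≤ √(1 - exp (-t ^ 2 / 2)) :=
    le_sqrt_of_sq_le (by nlinarith)
  linarith [gaussianReal_real_Ioi_le ht]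

lemma gaussianReal_real_Ioi_le_exp_neg_sq {t : ℝ} (ht : 0 ≤ t) (hhalf : 1 / 2 ≤ exp (-t ^ 2)) :
    (gaussianReal 0 1).real (Set.Ioi t) ≤ exp (-t ^ 2) / 2 := by
  have hx : exp (-t ^ 2) = exp (-t ^ 2 / 2) ^ 2 := by
    rw [← exp_nat_mul]
    congr 1
    push_cast
    ring
  have h0 := exp_pos (-t ^ 2 / 2)
  have h1 : exp (-t ^ 2 / 2) ≤ 1 := exp_le_one_iff.2 (by nlinarith)
  rw [hx] at hhalf ⊢
  have hsqrt : 1 - exp (-t ^ 2 / 2) ^ 2 ≤ √(1 - exp (-t ^ 2 / 2)) := by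
    apply le_sqrt_of_sq_le
    nlinarith [mul_nonneg (mul_nonneg h0.le (sub_nonneg.2 h1))
      (by nlinarith : 0 ≤ exp (-t ^ 2 / 2) ^ 2 + exp (-t ^ 2 / 2) - 1)]
  linarith [gaussianReal_real_Ioi_le ht]

end Gaussian

section Diffusion

variable {μ : ℝ} {v : ℝ≥0} {f f' f'' : ℝ → ℝ} {C : ℝ}

lemma integrable_id_gaussianReal : Integrable (fun x ↦ x) (gaussianReal μ v) :=
  (memLp_id_gaussianReal 1).integrable le_rfl

lemma abs_le_of_hasDerivAt_of_abs_le (hf : ∀ y, HasDerivAt f (f' y) y) (hC : ∀ y, |f' y| ≤ C)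
    (y : ℝ) : |f y| ≤ |f 0| + C * |y| := by
  have hlip := convex_univ.norm_image_sub_le_of_norm_hasDerivWithin_le
    (fun y _ ↦ (hf y).hasDerivWithinAt) (fun y _ ↦ hC y) (Set.mem_univ 0) (Set.mem_univ y)
  simp only [norm_eq_abs, sub_zero] at hlip
  linarith [abs_sub_abs_le_abs_sub (f y) (f 0)]

lemma hasDerivAt_mul_add_sqrt_mul (c z : ℝ) {r : ℝ} (hr : r ≠ 0) :
    HasDerivAt (fun r ↦ c * r + √r * z) (c + z / (2 * √r)) r := by
  convert! ((hasDerivAt_id' r).const_mul c).fun_add ((hasDerivAt_sqrt hr).mul_const z) using 1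
  ring

lemma hasDerivAt_integral_comp_mul_add_sqrt_mul (hf : ∀ y, HasDerivAt f (f' y) y)
    (hf' : Continuous f') (hC : ∀ y, |f' y| ≤ C) (c : ℝ) {r : ℝ} (hr : 0 < r) :
    HasDerivAt (fun r ↦ ∫ z, f (c * r + √r * z) ∂gaussianReal 0 1)
      (∫ z, f' (c * r + √r * z) * (c + z / (2 * √r)) ∂gaussianReal 0 1) r := by
  have hfc : Continuous f := continuous_iff_continuousAt.2 fun y ↦ (hf y).continuousAt
  have habs : Integrable (fun z : ℝ ↦ |z|) (gaussianReal 0 1) := integrable_id_gaussianReal.abs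
  have hint : Integrable (fun z ↦ f (c * r + √r * z)) (gaussianReal 0 1) := by
    have hbound : Integrable (fun z ↦ |f 0| + C * |c * r + √r * z|) (gaussianReal 0 1) :=
      (integrable_const _).add
        (((integrable_const _).add (integrable_id_gaussianReal.const_mul _)).abs.const_mul _)
    exact hbound.mono' (Continuous.aestronglyMeasurable (by fun_prop))
      (ae_of_all _ fun z ↦ abs_le_of_hasDerivAt_of_abs_le hf hC _)
  have hdom (z x : ℝ) (hx : x ∈ Set.Ioi (r / 2)) :
      ‖f' (c * x + √x * z) * (c + z / (2 * √x))‖ ≤ C * (|c| + |z| / (2 * √(r / 2))) := by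
    have hx : r / 2 ≤ x := le_of_lt hx
    calc ‖f' (c * x + √x * z) * (c + z / (2 * √x))‖
        ≤ C * (|c| + |z / (2 * √x)|) := by
          rw [norm_mul]
          gcongr
          exacts [(abs_nonneg _).trans (hC 0), hC _, abs_add_le _ _]
      _ = C * (|c| + |z| / (2 * √x)) := by rw [abs_div, abs_of_nonneg (by positivity : 0 ≤ 2 * √x)]
      _ ≤ C * (|c| + |z| / (2 * √(r / 2))) := by
          gcongr
          exact (abs_nonneg _).trans (hC 0)
  exact (hasDerivAt_integral_of_dominated_loc_of_deriv_le
    (F := fun r z ↦ f (c * r + √r * z)) (F' := fun r z ↦ f' (c * r + √r * z) * (c + z / (2 * √r)))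
    (Ioi_mem_nhds (half_lt_self hr))
    (.of_forall fun x ↦ Continuous.aestronglyMeasurable (by fun_prop)) hint
    (Continuous.aestronglyMeasurable (by fun_prop)) (ae_of_all _ hdom)
    (((integrable_const _).add (habs.div_const _)).const_mul _)
    (ae_of_all _ fun z x hx ↦ (hf _).comp x
      (hasDerivAt_mul_add_sqrt_mul c z ((half_pos hr).trans hx).ne'))).2

lemma integrable_comp_gaussianReal_of_abs_le (hf : Measurable f) (hC : ∀ y, |f y| ≤ C) (m s : ℝ) :
    Integrable (fun z ↦ f (m + s * z)) (gaussianReal 0 1) :=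
  .of_bound (hf.comp (by fun_prop)).aestronglyMeasurable C (ae_of_all _ fun _ ↦ hC _)

lemma hasDerivAt_integral_comp_mul_add_sqrt_mul_of_deriv2 {D : ℝ} (hf : ∀ y, HasDerivAt f (f' y) y)
    (hf' : ∀ y, HasDerivAt f' (f'' y) y) (hC : ∀ y, |f' y| ≤ C) (hD : ∀ y, |f'' y| ≤ D)
    (c : ℝ) {r : ℝ} (hr : 0 < r) :
    HasDerivAt (fun r ↦ ∫ z, f (c * r + √r * z) ∂gaussianReal 0 1)
      (c * ∫ z, f' (c * r + √r * z) ∂gaussianReal 0 1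
        + 1 / 2 * ∫ z, f'' (c * r + √r * z) ∂gaussianReal 0 1) r := by
  have hcont : Continuous f' := continuous_iff_continuousAt.2 fun y ↦ (hf' y).continuousAt
  have hmeas : Measurable f'' := by
    rw [← funext fun y ↦ (hf' y).deriv]
    exact measurable_deriv f'
  have hint' := integrable_comp_gaussianReal_of_abs_le hcont.measurable hC (c * r) √r
  have hint'' := integrable_comp_gaussianReal_of_abs_le hmeas hD (c * r) √r
  have hint_id : Integrable (fun z ↦ z * f' (c * r + √r * z)) (gaussianReal 0 1) :=
    integrable_id_gaussianReal.mul_bdd hint'.aestronglyMeasurable (ae_of_all _ fun _ ↦ hC _)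
  have hstein : ∫ z, z * f' (c * r + √r * z) ∂gaussianReal 0 1
      = √r * ∫ z, f'' (c * r + √r * z) ∂gaussianReal 0 1 := by
    have hinner (z : ℝ) : HasDerivAt (fun z ↦ c * r + √r * z) √r z := by
      simpa using ((hasDerivAt_id' z).const_mul √r).const_add (c * r)
    have hderiv (z : ℝ) :
        HasDerivAt (fun z ↦ f' (c * r + √r * z)) (√r * f'' (c * r + √r * z)) z :=
      ((hf' _).comp z (hinner z)).congr_deriv (mul_comm _ _)
    simpa [integral_const_mul] using integral_sub_mul_gaussianReal hderiv hint'
      (by simpa using hint_id) (hint''.const_mul √r)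
  convert! hasDerivAt_integral_comp_mul_add_sqrt_mul hf hcont hC c hr using 1
  have hsqrt : √r ≠ 0 := (sqrt_pos.2 hr).ne'
  calc c * ∫ z, f' (c * r + √r * z) ∂gaussianReal 0 1
        + 1 / 2 * ∫ z, f'' (c * r + √r * z) ∂gaussianReal 0 1
      = c * ∫ z, f' (c * r + √r * z) ∂gaussianReal 0 1
        + 1 / (2 * √r) * ∫ z, z * f' (c * r + √r * z) ∂gaussianReal 0 1 := by
        rw [hstein]
        field_simp
    _ = ∫ z, f' (c * r + √r * z) * (c + z / (2 * √r)) ∂gaussianReal 0 1 := by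
        rw [← integral_const_mul, ← integral_const_mul,
          ← integral_add (hint'.const_mul _) (hint_id.const_mul _)]
        congr with z
        ring

end Diffusion

section LogitNormal

/-- The mean of the logit-normal distribution with location `m` and scale `s`, that is of
`sigmoid (m + s * Z)` with `Z` standard Gaussian. -/
def logitNormalMean (m s : ℝ) : ℝ := ∫ z, sigmoid (m + s * z) ∂gaussianReal 0 1

variable {m s t : ℝ}

lemma abs_sigmoid_le_one (x : ℝ) : |sigmoid x| ≤ 1 :=
  abs_le.2 ⟨by linarith [sigmoid_nonneg x], sigmoid_le_one x⟩

lemma integrable_sigmoid_comp (m s : ℝ) :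
    Integrable (fun z ↦ sigmoid (m + s * z)) (gaussianReal 0 1) :=
  integrable_comp_gaussianReal_of_abs_le continuous_sigmoid.measurable abs_sigmoid_le_one m s

lemma logitNormalMean_mono (s : ℝ) : Monotone fun m ↦ logitNormalMean m s := fun m₁ m₂ h ↦
  integral_mono (integrable_sigmoid_comp m₁ s) (integrable_sigmoid_comp m₂ s)
    fun z ↦ sigmoid_le (by linarith)

lemma integral_sigmoid_mul_one_sub (a l s : ℝ) :
    ∫ z, sigmoid (a + s * z + l) * (1 - sigmoid (a + s * z + l)) ∂gaussianReal 0 1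
      = logitNormalMean (a + l) s - ∫ z, sigmoid (a + s * z + l) ^ 2 ∂gaussianReal 0 1 := by
  have hint_sq := integrable_comp_gaussianReal_of_abs_le
    (f := fun y ↦ sigmoid (y + l) ^ 2) (C := 1) (by fun_prop)
    (fun y ↦ by rw [abs_pow]; exact pow_le_one₀ (abs_nonneg _) (abs_sigmoid_le_one _)) a s
  simp only [logitNormalMean, mul_one_sub, ← sq, add_right_comm a l]
  exact integral_sub (integrable_comp_gaussianReal_of_abs_le (f := fun y ↦ sigmoid (y + l))
    (by fun_prop) (fun _ ↦ abs_sigmoid_le_one _) a s) hint_sq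

lemma sigmoid_le_exp (x : ℝ) : sigmoid x ≤ exp x := by
  rw [← neg_neg x, ← sigmoid_mul_rexp_neg]
  exact mul_le_of_le_one_left (exp_pos _).le (sigmoid_le_one _)

lemma one_sub_sigmoid_le_exp_neg_mul {κ : ℝ} (h0 : 0 ≤ κ) (h1 : κ ≤ 1) (x : ℝ) :
    1 - sigmoid x ≤ exp (-(κ * x)) := by
  rw [← sigmoid_neg]
  obtain hx | hx := le_total 0 x
  · exact (sigmoid_le_exp _).trans (exp_le_exp.2 (by nlinarith))
  · exact (sigmoid_le_one _).trans (one_le_exp (by nlinarith))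

lemma logitNormalMean_le_add_exp (m t : ℝ) (hs : 0 ≤ s) :
    logitNormalMean m s ≤ (gaussianReal 0 1).real (Set.Ioi t) + exp (m + s * t) := by
  have hind : Integrable ((Set.Ioi t).indicator fun _ ↦ (1 : ℝ)) (gaussianReal 0 1) :=
    (integrable_const 1).indicator measurableSet_Ioi
  calc logitNormalMean m s
      ≤ ∫ z, ((Set.Ioi t).indicator (fun _ ↦ 1) z + exp (m + s * t)) ∂gaussianReal 0 1 := by
        refine integral_mono (integrable_sigmoid_comp m s) (hind.add (integrable_const _))
          fun z ↦ ?_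
        by_cases hz : z ∈ Set.Ioi t
        · simp only [Set.indicator_of_mem hz]
          linarith [sigmoid_le_one (m + s * z), exp_pos (m + s * t)]
        · simp only [Set.indicator_of_notMem hz, zero_add]
          refine (sigmoid_le_exp _).trans ?_
          gcongr
          exact not_lt.1 hz
    _ = (gaussianReal 0 1).real (Set.Ioi t) + exp (m + s * t) := by
        rw [integral_add hind (integrable_const _), integral_indicator_const _ measurableSet_Ioi]
        simp

lemma mul_sigmoid_le_logitNormalMean (m t : ℝ) (hs : 0 ≤ s) :
    (1 - (gaussianReal 0 1).real (Set.Ioi t)) * sigmoid (m - s * t) ≤ logitNormalMean m s := by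
  calc (1 - (gaussianReal 0 1).real (Set.Ioi t)) * sigmoid (m - s * t)
      = ∫ z, (Set.Iio (-t))ᶜ.indicator (fun _ ↦ sigmoid (m - s * t)) z ∂gaussianReal 0 1 := by
        rw [integral_indicator_const _ measurableSet_Iio.compl,
          probReal_compl_eq_one_sub measurableSet_Iio, gaussianReal_real_Iio_neg, smul_eq_mul]
    _ ≤ logitNormalMean m s := by
        refine integral_mono ((integrable_const _).indicator measurableSet_Iio.compl)
          (integrable_sigmoid_comp m s)
          (Set.indicator_le' (fun z hz ↦ sigmoid_le ?_) fun z _ ↦ sigmoid_nonneg _)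
        have hz : -t ≤ z := not_lt.1 hz
        nlinarith

lemma one_sub_logitNormalMean_le {κ : ℝ} (h0 : 0 ≤ κ) (h1 : κ ≤ 1) (m s : ℝ) :
    1 - logitNormalMean m s ≤ exp (-(κ * m) + κ ^ 2 * s ^ 2 / 2) := by
  have hmgf : ∫ z, exp (-(κ * s) * z) ∂gaussianReal 0 1 = exp (κ ^ 2 * s ^ 2 / 2) := by
    have h := congrFun (mgf_fun_id_gaussianReal (μ := 0) (v := 1)) (-(κ * s))
    simpa [mgf, mul_pow] using h
  calc 1 - logitNormalMean m s = ∫ z, (1 - sigmoid (m + s * z)) ∂gaussianReal 0 1 := by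
        rw [integral_sub (integrable_const 1) (integrable_sigmoid_comp m s), logitNormalMean]
        simp
    _ ≤ ∫ z, exp (-(κ * m)) * exp (-(κ * s) * z) ∂gaussianReal 0 1 := by
        refine integral_mono ((integrable_const 1).sub (integrable_sigmoid_comp m s))
          ((integrable_exp_mul_gaussianReal _).const_mul _) fun z ↦ ?_
        rw [← exp_add]
        refine (one_sub_sigmoid_le_exp_neg_mul h0 h1 _).trans_eq ?_
        ring_nf
    _ = exp (-(κ * m) + κ ^ 2 * s ^ 2 / 2) := by rw [integral_const_mul, hmgf, exp_add]

lemma logitNormalMean_le (m : ℝ) (hs : 0 ≤ s) (ht : 0 ≤ t) :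
    logitNormalMean m s ≤ exp (-t ^ 2 / 2) / 2 + exp (m + s * t) :=
  (logitNormalMean_le_add_exp m t hs).trans (by gcongr; exact gaussianReal_real_Ioi_le_exp ht)

lemma le_logitNormalMean (hs : 0 < s) (hm0 : 0 ≤ m) (hm : m ≤ s ^ 2) :
    (1 - exp (-(m / (2 * s)) ^ 2) / 2) * sigmoid (m / 2) ≤ logitNormalMean m s := by
  set t := m / (2 * s) with ht
  have ht0 : 0 ≤ t := by positivity
  have hst : m - s * t = m / 2 := by
    rw [ht]
    field_simp
    ring
  obtain hhalf | hhalf := le_total (1 / 2) (exp (-t ^ 2))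
  · have htail := gaussianReal_real_Ioi_le_exp_neg_sq ht0 hhalf
    calc (1 - exp (-t ^ 2) / 2) * sigmoid (m / 2)
        ≤ (1 - (gaussianReal 0 1).real (Set.Ioi t)) * sigmoid (m - s * t) := by
          rw [hst]
          gcongr
          exact sigmoid_nonneg _
      _ ≤ logitNormalMean m s := mul_sigmoid_le_logitNormalMean m t hs.le
  · -- `κ = m / s ^ 2` minimises the Chernoff exponent; `exp (-2 t ^ 2) ≤ exp (-t ^ 2) / 2` here.
    have hchernoff : 1 - logitNormalMean m s ≤ exp (-t ^ 2) * exp (-t ^ 2) := by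
      refine (one_sub_logitNormalMean_le (div_nonneg hm0 (sq_nonneg s))
        (div_le_one_of_le₀ hm (sq_nonneg s)) m s).trans_eq ?_
      rw [← exp_add, ht]
      congr 1
      field_simp
      ring
    have hpos := exp_pos (-t ^ 2)
    calc (1 - exp (-t ^ 2) / 2) * sigmoid (m / 2)
        ≤ 1 - exp (-t ^ 2) / 2 := mul_le_of_le_one_right (by linarith) (sigmoid_le_one _)
      _ ≤ logitNormalMean m s := by nlinarith

end LogitNormal

section Posterior

variable {ρ : ℝ}

/-- The prior log-odds of `1` against `0` under the Bernoulli prior with success probability `ρ`. -/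
def logOdds (ρ : ℝ) : ℝ := log ρ - log (1 - ρ)

lemma exp_logOdds (hρ : ρ ∈ Set.Ioo (0 : ℝ) 1) : exp (logOdds ρ) = ρ / (1 - ρ) := by
  rw [logOdds, exp_sub, exp_log hρ.1, exp_log (sub_pos.2 hρ.2)]

lemma partition_pos (hρ : ρ ∈ Set.Ioo (0 : ℝ) 1) (y : ℝ) : 0 < 1 - ρ + ρ * exp y :=
  add_pos (sub_pos.2 hρ.2) (mul_pos hρ.1 (exp_pos y))

lemma sigmoid_add_logOdds (hρ : ρ ∈ Set.Ioo (0 : ℝ) 1) (y : ℝ) :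
    sigmoid (y + logOdds ρ) = ρ * exp y / (1 - ρ + ρ * exp y) := by
  have hodds : 0 < ρ / (1 - ρ) := div_pos hρ.1 (sub_pos.2 hρ.2)
  have hpartition := partition_pos hρ y
  rw [sigmoid_def, exp_neg, exp_add, exp_logOdds hρ, inv_eq_one_div,
    div_eq_div_iff (by positivity) hpartition.ne']
  field_simp [(sub_pos.2 hρ.2).ne', hρ.1.ne']
  ring

lemma hasDerivAt_log_partition (hρ : ρ ∈ Set.Ioo (0 : ℝ) 1) (y : ℝ) :
    HasDerivAt (fun y ↦ log (1 - ρ + ρ * exp y)) (sigmoid (y + logOdds ρ)) y := by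
  rw [sigmoid_add_logOdds hρ]
  exact (((hasDerivAt_exp y).const_mul ρ).const_add (1 - ρ)).log (partition_pos hρ y).ne'

lemma one_sub_mul_exp_neg_mul_sq_sigmoid (hρ : ρ ∈ Set.Ioo (0 : ℝ) 1) (y : ℝ) :
    (1 - ρ) * (exp (-y) * sigmoid (y + logOdds ρ) ^ 2)
      = ρ * (sigmoid (y + logOdds ρ) * (1 - sigmoid (y + logOdds ρ))) := by
  have hρ0 : ρ ≠ 0 := hρ.1.ne'
  have hρ1 : 1 - ρ ≠ 0 := (sub_pos.2 hρ.2).ne'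
  rw [← sigmoid_neg, ← sigmoid_mul_rexp_neg, neg_add, exp_add, exp_neg (logOdds ρ),
    exp_logOdds hρ]
  field_simp

/-- The weight is the likelihood ratio of `X* = 0` against `X* = 1`. -/
lemma integral_exp_neg_mul_comp (f : ℝ → ℝ) {r : ℝ} (hr : 0 ≤ r) :
    ∫ z, exp (-(1 / 2 * r + √r * z)) * f (1 / 2 * r + √r * z) ∂gaussianReal 0 1
      = ∫ z, f (-(1 / 2) * r + √r * z) ∂gaussianReal 0 1 := by
  have h := integral_comp_add_gaussianReal (μ := 0) (v := 1)
    (fun z ↦ f (1 / 2 * r + √r * z)) (-√r)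
  simp only [NNReal.coe_one, smul_eq_mul] at h
  convert! h.symm using 4 with z z
  · rw [neg_sq, sq_sqrt hr]
    ring_nf
  · linear_combination mul_self_sqrt hr

lemma psiB_eq (hρ : ρ ∈ Set.Ioo (0 : ℝ) 1) (r : ℝ) :
    psiB ρ r
      = (1 - ρ) * ∫ z, log (1 - ρ + ρ * exp (-(1 / 2) * r + √r * z)) ∂gaussianReal 0 1
        + ρ * ∫ z, log (1 - ρ + ρ * exp (1 / 2 * r + √r * z)) ∂gaussianReal 0 1 := by
  have hint (c : ENNReal) (hc : c ≠ ⊤) (a : ℝ) (F : ℝ → ℝ) : Integrable F (c • .dirac a) :=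
    (integrable_dirac enorm_lt_top).smul_measure hc
  rw [psiB, bern, integral_add_measure (hint _ ENNReal.ofReal_ne_top _ _)
      (hint _ ENNReal.ofReal_ne_top _ _),
    integral_smul_measure, integral_smul_measure, integral_dirac, integral_dirac,
    ENNReal.toReal_ofReal (sub_pos.2 hρ.2).le, ENNReal.toReal_ofReal hρ.1.le]
  simp only [smul_eq_mul, stdG]
  ring_nf

lemma hasDerivAt_integral_log_partition (hρ : ρ ∈ Set.Ioo (0 : ℝ) 1) (c : ℝ) {r : ℝ} (hr : 0 < r) :
    HasDerivAt (fun r ↦ ∫ z, log (1 - ρ + ρ * exp (c * r + √r * z)) ∂gaussianReal 0 1)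
      ((c + 1 / 2) * logitNormalMean (c * r + logOdds ρ) √r
        - 1 / 2 * ∫ z, sigmoid (c * r + √r * z + logOdds ρ) ^ 2 ∂gaussianReal 0 1) r := by
  have hsigmoid (y : ℝ) : HasDerivAt (fun y ↦ sigmoid (y + logOdds ρ))
      (sigmoid (y + logOdds ρ) * (1 - sigmoid (y + logOdds ρ))) y :=
    (hasDerivAt_sigmoid _).comp_add_const y (logOdds ρ)
  have hbound (y : ℝ) : |sigmoid (y + logOdds ρ) * (1 - sigmoid (y + logOdds ρ))| ≤ 1 := by
    rw [← sigmoid_neg, abs_mul]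
    exact mul_le_one₀ (abs_sigmoid_le_one _) (abs_nonneg _) (abs_sigmoid_le_one _)
  have hmean : ∫ z, sigmoid (c * r + √r * z + logOdds ρ) ∂gaussianReal 0 1
      = logitNormalMean (c * r + logOdds ρ) √r := by
    simp only [logitNormalMean, add_right_comm _ (logOdds ρ)]
  convert! hasDerivAt_integral_comp_mul_add_sqrt_mul_of_deriv2 (hasDerivAt_log_partition hρ)
    hsigmoid (fun _ ↦ abs_sigmoid_le_one _) hbound c hr using 1
  rw [integral_sigmoid_mul_one_sub, hmean]
  ring

lemma hasDerivAt_psiB (hρ : ρ ∈ Set.Ioo (0 : ℝ) 1) {r : ℝ} (hr : 0 < r) :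
    HasDerivAt (psiB ρ) (ρ / 2 * logitNormalMean (r / 2 + logOdds ρ) √r) r := by
  have htilt : (1 - ρ) * ∫ z, sigmoid (-(1 / 2) * r + √r * z + logOdds ρ) ^ 2 ∂gaussianReal 0 1
      = ρ * (logitNormalMean (1 / 2 * r + logOdds ρ) √r
        - ∫ z, sigmoid (1 / 2 * r + √r * z + logOdds ρ) ^ 2 ∂gaussianReal 0 1) := by
    rw [← integral_exp_neg_mul_comp (fun y ↦ sigmoid (y + logOdds ρ) ^ 2) hr.le,
      ← integral_const_mul]
    simp only [one_sub_mul_exp_neg_mul_sq_sigmoid hρ]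
    rw [integral_const_mul, integral_sigmoid_mul_one_sub]
  rw [funext (psiB_eq hρ)]
  convert! ((hasDerivAt_integral_log_partition hρ (-(1 / 2)) hr).const_mul (1 - ρ)).fun_add
    ((hasDerivAt_integral_log_partition hρ (1 / 2) hr).const_mul ρ) using 1
  rw [show r / 2 = 1 / 2 * r by ring]
  linear_combination (1 / 2) * htilt

lemma gB_two_mul_div {γ a : ℝ} (hγ : γ ≠ 0) (hρ : ρ ∈ Set.Ioo (0 : ℝ) 1) (ha : 0 < a) :
    gB γ ρ (2 * a / γ)
      = logitNormalMean ((a - 1) * |log ρ| - log (1 - ρ)) √(2 * a * |log ρ|) := by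
  have hlog : log ρ < 0 := log_neg hρ.1 hρ.2
  have hL : 0 < |log ρ| := abs_pos.2 hlog.ne
  have hρ0 : ρ ≠ 0 := hρ.1.ne'
  have harg : γ * |log ρ| * (2 * a / γ) = 2 * a * |log ρ| := by field_simp
  have hloc : 2 * a * |log ρ| / 2 + logOdds ρ = (a - 1) * |log ρ| - log (1 - ρ) := by
    rw [logOdds, abs_of_neg hlog]
    ring
  rw [gB, harg, (hasDerivAt_psiB hρ (by positivity)).deriv, hloc]
  field_simp

lemma gB_le {γ ε : ℝ} (hγ : γ ≠ 0) (hρ : ρ ∈ Set.Ioo (0 : ℝ) 1) (hε0 : 0 ≤ ε) (hε1 : ε < 1) :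
    gB γ ρ (2 * (1 - ε) / γ)
      ≤ exp (-(ε ^ 2 / 16) * (|log ρ| / (1 - ε))) / 2
        + exp (-(ε / 2) * |log ρ|) / (1 - ρ) := by
  have h1ε : 0 < 1 - ε := sub_pos.2 hε1
  have hL : 0 < |log ρ| := abs_pos.2 (log_neg hρ.1 hρ.2).ne
  rw [gB_two_mul_div hγ hρ h1ε]
  set s := √(2 * (1 - ε) * |log ρ|)
  have hs : 0 < s := sqrt_pos.2 (by positivity)
  have hsq : s ^ 2 = 2 * (1 - ε) * |log ρ| := sq_sqrt (by positivity)
  set t := ε * |log ρ| / (2 * s) with ht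
  have hgauss : -t ^ 2 / 2 = -(ε ^ 2 / 16) * (|log ρ| / (1 - ε)) := by
    rw [ht, div_pow, mul_pow 2 s, hsq]
    field_simp
    ring
  have hloc : (1 - ε - 1) * |log ρ| - log (1 - ρ) + s * t
      = -(ε / 2) * |log ρ| - log (1 - ρ) := by
    rw [ht]
    field_simp
    ring
  have hbound := logitNormalMean_le ((1 - ε - 1) * |log ρ| - log (1 - ρ)) hs.le
    (by positivity : 0 ≤ t)
  rwa [hgauss, hloc, exp_sub, exp_log (sub_pos.2 hρ.2)] at hbound

lemma le_gB {γ ε : ℝ} (hγ : γ ≠ 0) (hρ : ρ ∈ Set.Ioo (0 : ℝ) 1) (hε0 : 0 ≤ ε) (hε1 : ε ≤ 1) :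
    (1 - exp (-(ε ^ 2 / 16) * |log ρ|) / 2) / (1 + exp (-(ε / 2) * |log ρ|))
      ≤ gB γ ρ (2 * (1 + ε) / γ) := by
  have hL : 0 < |log ρ| := abs_pos.2 (log_neg hρ.1 hρ.2).ne
  rw [gB_two_mul_div hγ hρ (by linarith : 0 < 1 + ε)]
  set s := √(2 * (1 + ε) * |log ρ|)
  have hs : 0 < s := sqrt_pos.2 (by positivity)
  have hsq : s ^ 2 = 2 * (1 + ε) * |log ρ| := sq_sqrt (by positivity)
  have hgauss : -(ε * |log ρ| / (2 * s)) ^ 2 ≤ -(ε ^ 2 / 16) * |log ρ| := by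
    rw [div_pow, mul_pow 2 s, hsq, neg_mul, neg_le_neg_iff, le_div_iff₀ (by positivity)]
    nlinarith [mul_nonneg (mul_nonneg (sq_nonneg ε) (sq_nonneg |log ρ|)) (sub_nonneg.2 hε1)]
  calc (1 - exp (-(ε ^ 2 / 16) * |log ρ|) / 2) / (1 + exp (-(ε / 2) * |log ρ|))
      = (1 - exp (-(ε ^ 2 / 16) * |log ρ|) / 2) * sigmoid (ε * |log ρ| / 2) := by
        rw [sigmoid_def, div_eq_mul_inv]
        ring_nf
    _ ≤ (1 - exp (-(ε * |log ρ| / (2 * s)) ^ 2) / 2) * sigmoid (ε * |log ρ| / 2) := by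
        gcongr
        exact sigmoid_nonneg _
    _ ≤ logitNormalMean (ε * |log ρ|) s :=
        le_logitNormalMean hs (by positivity) (by rw [hsq]; nlinarith)
    _ ≤ logitNormalMean ((1 + ε - 1) * |log ρ| - log (1 - ρ)) s :=
        logitNormalMean_mono s (by linarith [log_nonpos (sub_pos.2 hρ.2).le (by linarith [hρ.1])])

end Posterior

/-- Lemma 2 of the paper: bounds on g_ρ for the Bernoulli prior. -/
theorem gB_bounds (γ : ℝ) (hγ : 0 < γ) :
    ∀ ρ ∈ Set.Ioo (0 : ℝ) 1, ∀ ε ∈ Set.Ioo (0 : ℝ) 1,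
      gB γ ρ (2 * (1 - ε) / γ)
        ≤ Real.exp (-(ε ^ 2 / 16) * (|Real.log ρ| / (1 - ε))) / 2
          + Real.exp (-(ε / 2) * |Real.log ρ|) / (1 - ρ) ∧
      (1 - Real.exp (-(ε ^ 2 / 16) * |Real.log ρ|) / 2)
          / (1 + Real.exp (-(ε / 2) * |Real.log ρ|))
        ≤ gB γ ρ (2 * (1 + ε) / γ) := by
  intro ρ hρ ε hε
  exact ⟨gB_le hγ.ne' hρ hε.1.le hε.2, le_gB hγ.ne' hρ hε.1.le hε.2.le⟩

end BernoulliPrior
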